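/- Let J_c = 1/(4(3−2√2)) and h_c = (1/2)log(2√2−2) − 1/4, and suppose (J,h) = (J_c,h_c). Then the unique maximizer of 𝑝̃ on [0,1] is m_c = 2−√2, λ_c := −𝑝̃⁽⁴⁾(m_c) > 0, and there exists a constant K (independent of N) such that for all N ≥ 1, sup_{z∈ℝ} |ℙ((|𝓜(D)| − N·m_c)/N^{3/4} ≤ z) − ℙ(Y ≤ z)| ≤ K/N^{1/4}, where D is drawn from the IMD Gibbs measure and Y is a real random variable with probability density c·e^{−λ_c z⁴/24}, c being the normalizing constant. -/

import Mathlib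

open Real Finset MeasureTheory

noncomputable section

/-- Dimer configurations (matchings of the complete graph on `Fin N`), encoded as
involutions of `Fin N`: fixed points are monomers, 2-cycles are dimers. -/
abbrev Dimer (N : ℕ) := {f : Fin N → Fin N // ∀ i, f (f i) = i}

/-- The set of monomers (dimer-free vertices) of a dimer configuration. -/
def monomers {N : ℕ} (D : Dimer N) : Finset (Fin N) :=
  Finset.univ.filter fun i => D.1 i = i

/-- Monomer density `m(D) = |𝓜(D)|/N`. -/
def mDim {N : ℕ} (D : Dimer N) : ℝ := ((monomers D).card : ℝ) / N

/-- The parameter `b = (log N)/2 + h - J`. -/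
def bIMD (N : ℕ) (J h : ℝ) : ℝ := Real.log N / 2 + h - J

/-- The Gibbs weight `exp(-H(D)) = exp(N (a m(D)^2 + b m(D)))` with `a = J`. -/
def wDim (N : ℕ) (J h : ℝ) (D : Dimer N) : ℝ :=
  Real.exp (N * (J * mDim D ^ 2 + bIMD N J h * mDim D))

/-- The probability of an event `A` under the IMD Gibbs measure. -/
def probDim (N : ℕ) (J h : ℝ) (A : Dimer N → Prop) : ℝ :=
  (∑ D : Dimer N, Set.indicator {D | A D} (wDim N J h) D) / ∑ D : Dimer N, wDim N J h D

/-- The conditional probability `ℙ(A | B)` under the IMD Gibbs measure. -/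
def condProbDim (N : ℕ) (J h : ℝ) (A B : Dimer N → Prop) : ℝ :=
  (∑ D : Dimer N, Set.indicator {D | A D ∧ B D} (wDim N J h) D) /
    ∑ D : Dimer N, Set.indicator {D | B D} (wDim N J h) D

/-- `g(x) = (√(e^{4x} + 4 e^{2x}) - e^{2x})/2`. -/
def gFun (x : ℝ) : ℝ := (Real.sqrt (Real.exp (4*x) + 4 * Real.exp (2*x)) - Real.exp (2*x)) / 2

/-- `τ(x) = (2x-1)J + h`. -/
def tauFun (J h x : ℝ) : ℝ := (2*x - 1) * J + h

/-- `𝑝̃(m) = -J m² - (1 - g(τ(m)) + log(1 - g(τ(m))))/2`. -/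
def ptilde (J h m : ℝ) : ℝ :=
  -J * m^2 - (1 - gFun (tauFun J h m) + Real.log (1 - gFun (tauFun J h m))) / 2

/-- The CDF of a centered Gaussian with variance `v`, evaluated at `z`. -/
def gaussCDF (v : ℝ) (z : ℝ) : ℝ :=
  (ProbabilityTheory.gaussianReal 0 (Real.toNNReal v) (Set.Iic z)).toReal

/-- Spin configurations `Σ = {0,1}^N`. -/
abbrev Config (N : ℕ) := Fin N → Bool

/-- `𝓐(σ) = {i : σ_i = 1}`. -/
def ASet {N : ℕ} (σ : Config N) : Finset (Fin N) := Finset.univ.filter fun i => σ i = true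

/-- `M(σ) = ∑ σ_i`. -/
def Msum {N : ℕ} (σ : Config N) : ℕ := (ASet σ).card

/-- Magnetization `m(σ) = M(σ)/N`. -/
def mConf {N : ℕ} (σ : Config N) : ℝ := (Msum σ : ℝ) / N

/-- `D(σ)`: the number of dimer configurations `D` with `𝓜(D) = 𝓐(σ)`. -/
def Dcount (N : ℕ) (σ : Config N) : ℕ :=
  (Finset.univ.filter fun D : Dimer N => monomers D = ASet σ).card

/-- The weight `D(σ) exp(-H(σ))` of the weighted Curie–Weiss model. -/
def wConf (N : ℕ) (J h : ℝ) (σ : Config N) : ℝ :=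
  (Dcount N σ : ℝ) * Real.exp (N * (J * mConf σ ^ 2 + bIMD N J h * mConf σ))

/-- The probability of an event `A` under the weighted Curie–Weiss Gibbs measure. -/
def probConf (N : ℕ) (J h : ℝ) (A : Config N → Prop) : ℝ :=
  (∑ σ : Config N, Set.indicator {σ | A σ} (wConf N J h) σ) / ∑ σ : Config N, wConf N J h σ

/-- Expectation under the weighted Curie–Weiss Gibbs measure. -/
def EConf (N : ℕ) (J h : ℝ) (f : Config N → ℝ) : ℝ :=
  (∑ σ : Config N, wConf N J h σ * f σ) / ∑ σ : Config N, wConf N J h σ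

/-- `L₁(m) = 2(1-m)(m² - (1-m)e^{2τ(m)})/((1-m) + e^{2τ(m)})`. -/
def Lone (J h m : ℝ) : ℝ :=
  2*(1-m)*(m^2 - (1-m)*Real.exp (2 * tauFun J h m)) / ((1-m) + Real.exp (2 * tauFun J h m))

/-- `L₂(m) = 4(1-m)(m² + (1-m)e^{2τ(m)})/((1-m) + e^{2τ(m)})`. -/
def Ltwo (J h m : ℝ) : ℝ :=
  4*(1-m)*(m^2 + (1-m)*Real.exp (2 * tauFun J h m)) / ((1-m) + Real.exp (2 * tauFun J h m))

/-- The configuration obtained from `σ` by setting the spins at `u, v` to `s, t`. -/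
def upd {N : ℕ} (σ : Config N) (u v : Fin N) (s t : Bool) : Config N :=
  fun i => if i = u then s else if i = v then t else σ i

/-- The edges of the complete graph, enumerated as ordered pairs `u < v`. -/
def cEdges (N : ℕ) : Finset (Fin N × Fin N) := Finset.univ.filter fun p => p.1 < p.2

/-- The probability of resampling the pair of spins at `(u,v)` to `(s,t)`:
the conditional distribution of `(σ_u, σ_v)` given `(σ_i)_{i ≠ u,v}`. -/
def qCond (N : ℕ) (J h : ℝ) (σ : Config N) (u v : Fin N) (s t : Bool) : ℝ :=
  wConf N J h (upd σ u v s t) / ∑ st : Bool × Bool, wConf N J h (upd σ u v st.1 st.2)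

/-- `E[F(σ, σ') | σ]` for the exchangeable pair `(σ, σ')` obtained by resampling the
spins at a uniformly chosen edge. -/
def condE2 (N : ℕ) (J h : ℝ) (F : Config N → Config N → ℝ) (σ : Config N) : ℝ :=
  ((cEdges N).card : ℝ)⁻¹ * ∑ p ∈ cEdges N, ∑ st : Bool × Bool,
    qCond N J h σ p.1 p.2 st.1 st.2 * F σ (upd σ p.1 p.2 st.1 st.2)

/-- The weight of the Gibbs measure conditioned on the event `S`. -/
def wCond (N : ℕ) (J h : ℝ) (S : Config N → Prop) (σ : Config N) : ℝ :=
  Set.indicator {σ | S σ} (wConf N J h) σ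

/-- `ℙ_ℓ(A) = ℙ(A | S)`, probability under the conditioned Gibbs measure. -/
def probL (N : ℕ) (J h : ℝ) (S A : Config N → Prop) : ℝ :=
  (∑ σ : Config N, Set.indicator {σ | A σ} (wCond N J h S) σ) / ∑ σ : Config N, wCond N J h S σ

/-- Expectation under the conditioned Gibbs measure `ℙ(·|S)`. -/
def EL (N : ℕ) (J h : ℝ) (S : Config N → Prop) (f : Config N → ℝ) : ℝ :=
  (∑ σ : Config N, wCond N J h S σ * f σ) / ∑ σ : Config N, wCond N J h S σ

/-- Resampling probability for the conditioned measure `ℙ(·|S)`. -/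
def qCondL (N : ℕ) (J h : ℝ) (S : Config N → Prop) (σ : Config N) (u v : Fin N)
    (s t : Bool) : ℝ :=
  wCond N J h S (upd σ u v s t) / ∑ st : Bool × Bool, wCond N J h S (upd σ u v st.1 st.2)

/-- `E_ℓ[F(σ, σ') | σ]` for the exchangeable pair under the conditioned measure. -/
def condE2L (N : ℕ) (J h : ℝ) (S : Config N → Prop) (F : Config N → Config N → ℝ)
    (σ : Config N) : ℝ :=
  ((cEdges N).card : ℝ)⁻¹ * ∑ p ∈ cEdges N, ∑ st : Bool × Bool,
    qCondL N J h S σ p.1 p.2 st.1 st.2 * F σ (upd σ p.1 p.2 st.1 st.2)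

/-- The maximizer set `O` of `𝑝̃` on `[0,1]`. -/
def maxSet (J h : ℝ) : Set ℝ :=
  {x | x ∈ Set.Icc (0:ℝ) 1 ∧ ∀ y ∈ Set.Icc (0:ℝ) 1, ptilde J h y ≤ ptilde J h x}

end

/-! ### The critical point and the drift `(1 - m) e^{2τ(m)} - m²` -/

/-- The unnormalized drift of the monomer density: its sign decides whether adding two monomers
to a configuration of density `m` increases the Gibbs weight. -/
noncomputable def drift (J h m : ℝ) : ℝ := (1 - m) * Real.exp (2 * tauFun J h m) - m ^ 2

/-- The relations between `J`, `h` and `m_c` at the critical point. -/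
structure IsCritical (J h mc : ℝ) : Prop where
  J_eq : J = (3 + 2 * Real.sqrt 2) / 4
  mc_eq : mc = 2 - Real.sqrt 2
  exp_tau : Real.exp (2 * tauFun J h mc) = 2 * Real.sqrt 2 - 2

theorem sqrt_two_mem_Ioo : Real.sqrt 2 ∈ Set.Ioo (1.41 : ℝ) 1.42 := by
  constructor
  · exact Real.lt_sqrt_of_sq_lt (by norm_num)
  · rw [Real.sqrt_lt' (by norm_num)]; norm_num

theorem isCritical_of_eq {J h mc : ℝ} (hJ : J = 1 / (4 * (3 - 2 * Real.sqrt 2)))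
    (hh : h = Real.log (2 * Real.sqrt 2 - 2) / 2 - 1/4) (hmc : mc = 2 - Real.sqrt 2) :
    IsCritical J h mc := by
  have h2 : Real.sqrt 2 ^ 2 = 2 := Real.sq_sqrt (by norm_num)
  obtain ⟨hl, hu⟩ := sqrt_two_mem_Ioo
  have hJ' : J = (3 + 2 * Real.sqrt 2) / 4 := by
    rw [hJ, div_eq_div_iff (by nlinarith) (by norm_num)]
    linear_combination 16 * h2
  refine ⟨hJ', hmc, ?_⟩
  have : 2 * tauFun J h mc = Real.log (2 * Real.sqrt 2 - 2) := by
    rw [tauFun, hJ', hh, hmc]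
    linear_combination -2 * h2
  rw [this, Real.exp_log (by linarith)]

namespace IsCritical

variable {J h mc : ℝ}

theorem mc_mem (hc : IsCritical J h mc) : mc ∈ Set.Ioo (0 : ℝ) 1 := by
  obtain ⟨hl, hu⟩ := sqrt_two_mem_Ioo
  rw [hc.mc_eq]
  constructor <;> linarith

theorem J_pos (hc : IsCritical J h mc) : 0 < J := by
  rw [hc.J_eq]; positivity

theorem four_mul_J_mul_sq (hc : IsCritical J h mc) : 4 * J * mc ^ 2 = 2 := by
  have h2 : Real.sqrt 2 ^ 2 = 2 := Real.sq_sqrt (by norm_num)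
  rw [hc.J_eq, hc.mc_eq]
  linear_combination (2 * Real.sqrt 2 - 5) * h2

theorem four_mul_J_mul (hc : IsCritical J h mc) : 4 * J * (2 * mc - 1) = 1 := by
  have h2 : Real.sqrt 2 ^ 2 = 2 := Real.sq_sqrt (by norm_num)
  rw [hc.J_eq, hc.mc_eq]
  linear_combination -4 * h2

theorem drift_mc (hc : IsCritical J h mc) : drift J h mc = 0 := by
  have h2 : Real.sqrt 2 ^ 2 = 2 := Real.sq_sqrt (by norm_num)
  rw [drift, hc.exp_tau, hc.mc_eq]
  linear_combination h2

theorem hasDerivAt_ratio (hc : IsCritical J h mc) {m : ℝ} (hm : 0 < m) :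
    HasDerivAt (fun m => (1 - m) * Real.exp (2 * tauFun J h m) / m ^ 2)
      (-(4 * J * (m - mc) ^ 2 * Real.exp (2 * tauFun J h m) / m ^ 3)) m := by
  have h1 : HasDerivAt (fun m => 2 * tauFun J h m) (4 * J) m := by
    unfold tauFun
    exact (((((hasDerivAt_id m).const_mul 2).sub_const 1).mul_const J).add_const h
      |>.const_mul 2).congr_deriv (by ring)
  have h3 := (((hasDerivAt_id m).const_sub 1).mul h1.exp).div (hasDerivAt_pow 2 m)
    (by positivity)
  refine (h3.congr_deriv ?_)
  simp only [id, Pi.mul_apply]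
  field_simp
  linear_combination m * hc.four_mul_J_mul_sq - m ^ 2 * hc.four_mul_J_mul

theorem drift_pos (hc : IsCritical J h mc) {m : ℝ} (h0 : 0 ≤ m) (hm : m < mc) :
    0 < drift J h m := by
  rcases h0.eq_or_lt with rfl | h0
  · simp [drift, Real.exp_pos]
  have anti : StrictAntiOn (fun m => (1 - m) * Real.exp (2 * tauFun J h m) / m ^ 2)
      (Set.Icc m mc) := by
    refine strictAntiOn_of_deriv_neg (convex_Icc _ _) ?_ ?_
    · exact fun x hx => (hc.hasDerivAt_ratio (h0.trans_le hx.1)).continuousAt.continuousWithinAt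
    · intro x hx
      rw [interior_Icc] at hx
      have hx0 : 0 < x := h0.trans hx.1
      rw [(hc.hasDerivAt_ratio hx0).deriv]
      have : 0 < (x - mc) ^ 2 := by
        have : x - mc ≠ 0 := (sub_neg.2 hx.2).ne
        positivity
      have := hc.J_pos
      rw [neg_lt_zero]
      positivity
  have key := anti (Set.left_mem_Icc.2 hm.le) (Set.right_mem_Icc.2 hm.le) hm
  have hmc := hc.drift_mc
  have := hc.mc_mem.1
  simp only at key
  rw [drift, sub_eq_zero] at hmc
  rw [hmc, div_self (by positivity), one_lt_div (by positivity)] at key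
  rw [drift]; linarith

theorem drift_neg (hc : IsCritical J h mc) {m : ℝ} (hm : mc < m) :
    drift J h m < 0 := by
  have h0 := hc.mc_mem.1
  have anti : StrictAntiOn (fun m => (1 - m) * Real.exp (2 * tauFun J h m) / m ^ 2)
      (Set.Icc mc m) := by
    refine strictAntiOn_of_deriv_neg (convex_Icc _ _) ?_ ?_
    · exact fun x hx => (hc.hasDerivAt_ratio (h0.trans_le hx.1)).continuousAt.continuousWithinAt
    · intro x hx
      rw [interior_Icc] at hx
      have hx0 : 0 < x := h0.trans hx.1
      rw [(hc.hasDerivAt_ratio hx0).deriv]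
      have : 0 < (x - mc) ^ 2 := by
        have : x - mc ≠ 0 := (sub_pos.2 hx.1).ne'
        positivity
      have := hc.J_pos
      rw [neg_lt_zero]
      positivity
  have key := anti (Set.left_mem_Icc.2 hm.le) (Set.right_mem_Icc.2 hm.le) hm
  have hmc := hc.drift_mc
  have hm0 : 0 < m := h0.trans hm
  simp only at key
  rw [drift, sub_eq_zero] at hmc
  rw [hmc, div_self (by positivity), div_lt_one (by positivity)] at key
  rw [drift]; linarith

theorem abs_drift_add_le (hc : IsCritical J h mc) :
    ∃ C, 0 ≤ C ∧ ∀ y, |y| ≤ 1 →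
      |drift J h (mc + y) + (4 + 3 * Real.sqrt 2) / 3 * y ^ 3| ≤ C * y ^ 4 := by
  have h2 : Real.sqrt 2 ^ 2 = 2 := Real.sq_sqrt (by norm_num)
  obtain ⟨hl, hu⟩ := sqrt_two_mem_Ioo
  have hmc := hc.mc_eq
  set r := Real.sqrt 2
  refine ⟨2 * (6 ^ 4 * Real.exp 6) + 6 ^ 3, by positivity, fun y hy => ?_⟩
  set t := (3 + 2 * r) * y with ht
  have hexp : Real.exp (2 * tauFun J h (mc + y)) = (2 * r - 2) * Real.exp t := by
    rw [← hc.exp_tau, ← Real.exp_add]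
    congr 1
    rw [tauFun, tauFun, ht, hc.J_eq]
    ring
  have hty : |t| ≤ 6 * |y| := by
    rw [ht, abs_mul, abs_of_pos (by linarith)]
    exact mul_le_mul_of_nonneg_right (by linarith) (abs_nonneg y)
  set R := Real.exp t - (1 + t + t ^ 2 / 2 + t ^ 3 / 6) with hR
  have hRle : |R| ≤ 6 ^ 4 * Real.exp 6 * y ^ 4 := by
    have h1 := Complex.norm_exp_sub_sum_le_norm_mul_exp (t : ℂ) 4
    have h3 : Complex.exp t - ∑ m ∈ Finset.range 4, (t : ℂ) ^ m / m.factorial = ((R : ℝ) : ℂ) := by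
      rw [hR]
      push_cast
      simp [Finset.sum_range_succ, Nat.factorial]
    rw [h3, Complex.norm_real, Complex.norm_real, Real.norm_eq_abs, Real.norm_eq_abs] at h1
    have h4 : |t| ^ 4 ≤ 6 ^ 4 * y ^ 4 := by
      calc |t| ^ 4 ≤ (6 * |y|) ^ 4 := by gcongr
        _ = 6 ^ 4 * y ^ 4 := by rw [mul_pow, (by decide : Even 4).pow_abs]
    calc |R| ≤ |t| ^ 4 * Real.exp |t| := h1
      _ ≤ (6 ^ 4 * y ^ 4) * Real.exp 6 := by
        gcongr
        nlinarith
      _ = _ := by ring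
  have hexpand : drift J h (mc + y) + (4 + 3 * r) / 3 * y ^ 3
      = (r - 1 - y) * (2 * r - 2) * R - (2 * r - 2) * (3 + 2 * r) ^ 3 / 6 * y ^ 4 := by
    have : Real.exp t = R + (1 + t + t ^ 2 / 2 + t ^ 3 / 6) := by rw [hR]; ring
    rw [drift, hexp, this, hmc, ht]
    ring_nf
    have h3 : r ^ 3 = 2 * r := by linear_combination r * h2
    have h4 : r ^ 4 = 4 := by linear_combination (r ^ 2 + 2) * h2
    have h5 : r ^ 5 = 4 * r := by linear_combination (r ^ 3 + 2 * r) * h2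
    simp only [h2, h3, h4, h5]
    ring
  rw [hexpand]
  have hy4 : 0 ≤ y ^ 4 := by positivity
  have hc1 : |(r - 1 - y) * (2 * r - 2)| ≤ 2 := by
    rw [abs_le] at hy ⊢
    constructor <;> nlinarith
  have hc2 : |(2 * r - 2) * (3 + 2 * r) ^ 3 / 6| ≤ 6 ^ 3 := by
    rw [abs_of_nonneg (by have : 0 ≤ 2 * r - 2 := by linarith
                          positivity)]
    have : (3 + 2 * r) ^ 3 ≤ 6 ^ 3 := pow_le_pow_left₀ (by linarith) (by linarith) 3
    have h0 : 0 ≤ (3 + 2 * r) ^ 3 := by positivity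
    nlinarith
  calc _ ≤ |(r - 1 - y) * (2 * r - 2) * R| + |(2 * r - 2) * (3 + 2 * r) ^ 3 / 6 * y ^ 4| :=
        abs_sub _ _
    _ ≤ 2 * (6 ^ 4 * Real.exp 6 * y ^ 4) + 6 ^ 3 * y ^ 4 := by
        rw [abs_mul, abs_mul _ (y ^ 4), abs_of_nonneg hy4]
        gcongr
    _ = _ := by ring

theorem exists_mul_drift_le (hc : IsCritical J h mc) :
    ∃ c, 0 < c ∧ ∀ m ∈ Set.Icc (0 : ℝ) 1, (m - mc) * drift J h m ≤ -(c * (m - mc) ^ 4) := by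
  obtain ⟨C, hC, hT⟩ := hc.abs_drift_add_le
  have hcont : Continuous fun m => (m - mc) * drift J h m := by
    unfold drift tauFun
    fun_prop
  set η : ℝ := 1 / (C + 1) with hη
  have hη0 : 0 < η := by positivity
  have hmc := hc.mc_mem
  have hsign : ∀ m ∈ Set.Icc (0 : ℝ) 1, m ≠ mc → (m - mc) * drift J h m < 0 := by
    intro m hm hne
    rcases lt_or_gt_of_ne hne with hlt | hlt
    · exact mul_neg_of_neg_of_pos (by linarith) (hc.drift_pos hm.1 hlt)
    · exact mul_neg_of_pos_of_neg (by linarith) (hc.drift_neg hlt)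
  have hpow : ∀ m ∈ Set.Icc (0 : ℝ) 1, (m - mc) ^ 4 ≤ 1 := by
    intro m hm
    rw [← (by decide : Even 4).pow_abs]
    apply pow_le_one₀ (abs_nonneg _)
    rw [abs_le]
    constructor <;> linarith [hm.1, hm.2, hmc.1, hmc.2]
  obtain ⟨c', hc', hfar⟩ : ∃ c', 0 < c' ∧ ∀ m ∈ Set.Icc (0 : ℝ) 1, η ≤ |m - mc| →
      (m - mc) * drift J h m ≤ -c' := by
    have hK : IsCompact (Set.Icc (0 : ℝ) 1 ∩ {m | η ≤ |m - mc|}) :=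
      isCompact_Icc.inter_right (isClosed_le continuous_const (by fun_prop))
    rcases Set.eq_empty_or_nonempty (Set.Icc (0 : ℝ) 1 ∩ {m | η ≤ |m - mc|}) with he | hne
    · refine ⟨1, one_pos, fun m hm hm' => ?_⟩
      exact absurd (show m ∈ Set.Icc (0 : ℝ) 1 ∩ {m | η ≤ |m - mc|} from ⟨hm, hm'⟩) (by simp [he])
    · obtain ⟨x, hx, hmax⟩ := hK.exists_isMaxOn hne hcont.continuousOn
      refine ⟨-((x - mc) * drift J h x), ?_, fun m hm hm' => ?_⟩
      · have : x ≠ mc := by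
          rintro rfl
          have : η ≤ 0 := by simpa using hx.2
          linarith
        linarith [hsign x hx.1 this]
      · have := hmax (show m ∈ Set.Icc (0 : ℝ) 1 ∩ {m | η ≤ |m - mc|} from ⟨hm, hm'⟩)
        simpa using this
  refine ⟨min c' (1 / 3), by positivity, fun m hm => ?_⟩
  have hp4 : 0 ≤ (m - mc) ^ 4 := by positivity
  rcases le_or_gt η |m - mc| with hy | hy
  · have h1 := hfar m hm hy
    have h2 := hpow m hm
    have h3 : min c' (1 / 3) ≤ c' := min_le_left _ _
    have h4 : 0 ≤ min c' (1 / 3) := by positivity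
    nlinarith
  · have h1 : |m - mc| ≤ 1 := by
      rw [abs_le]
      constructor <;> linarith [hm.1, hm.2, hmc.1, hmc.2]
    have h2 := hT (m - mc) h1
    rw [add_sub_cancel] at h2
    set y := m - mc
    obtain ⟨hl, hu⟩ := sqrt_two_mem_Ioo
    have h3 : |y| * |drift J h m + (4 + 3 * Real.sqrt 2) / 3 * y ^ 3| ≤ y ^ 4 := by
      calc _ ≤ |y| * (C * y ^ 4) := by gcongr
        _ ≤ η * (C * y ^ 4) := by gcongr
        _ = (C / (C + 1)) * y ^ 4 := by rw [hη]; ring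
        _ ≤ 1 * y ^ 4 := by
          gcongr
          rw [div_le_one (by positivity)]
          linarith
        _ = y ^ 4 := one_mul _
    rw [← abs_mul] at h3
    have h4 := (abs_le.1 h3).2
    have h5 : min c' (1 / 3) * y ^ 4 ≤ 1 / 3 * y ^ 4 := by
      gcongr
      exact min_le_right _ _
    nlinarith

end IsCritical

/-! ### The pressure functional `𝑝̃` -/

theorem gFun_spec (x : ℝ) : 0 < gFun x ∧ gFun x ^ 2 = Real.exp (2 * x) * (1 - gFun x) := by
  have hE : 0 < Real.exp (2 * x) := Real.exp_pos _
  have h4 : Real.exp (4 * x) = Real.exp (2 * x) ^ 2 := by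
    rw [← Real.exp_nat_mul]; congr 1; push_cast; ring
  rw [gFun, h4]
  set E := Real.exp (2 * x)
  have hs := Real.sq_sqrt (show 0 ≤ E ^ 2 + 4 * E by positivity)
  have hlt : E < Real.sqrt (E ^ 2 + 4 * E) := Real.lt_sqrt_of_sq_lt (by linarith)
  constructor
  · linarith
  · linear_combination hs / 4

theorem gFun_lt_one (x : ℝ) : gFun x < 1 := by
  obtain ⟨h0, h1⟩ := gFun_spec x
  have := Real.exp_pos (2 * x)
  by_contra! hle
  nlinarith [sq_nonneg (gFun x), mul_nonneg this.le (sub_nonneg.2 hle)]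

theorem hasDerivAt_gFun (x : ℝ) :
    HasDerivAt gFun (2 * gFun x * (1 - gFun x) / (2 - gFun x)) x := by
  obtain ⟨h0, h1⟩ := gFun_spec x
  have h2 := gFun_lt_one x
  have hE : HasDerivAt (fun x => Real.exp (2 * x)) (Real.exp (2 * x) * 2) x := by
    simpa using ((hasDerivAt_id x).const_mul 2).exp
  have hE4 : HasDerivAt (fun x => Real.exp (4 * x)) (Real.exp (4 * x) * 4) x := by
    simpa using ((hasDerivAt_id x).const_mul 4).exp
  have hpos : 0 < Real.exp (4 * x) + 4 * Real.exp (2 * x) := by positivity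
  have hd := (((hE4.add (hE.const_mul 4)).sqrt hpos.ne').sub hE).div_const 2
  refine hd.congr_deriv ?_
  simp only [Pi.add_apply]
  have hg : Real.sqrt (Real.exp (4 * x) + 4 * Real.exp (2 * x))
      = 2 * gFun x + Real.exp (2 * x) := by
    rw [gFun]; ring
  have h4 : Real.exp (4 * x) = Real.exp (2 * x) ^ 2 := by
    rw [← Real.exp_nat_mul]; congr 1; push_cast; ring
  rw [hg, h4]
  have hEp := Real.exp_pos (2 * x)
  have h1' : Real.exp (2 * x) = gFun x ^ 2 / (1 - gFun x) := by
    rw [h1, mul_div_assoc, div_self (by linarith), mul_one]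
  rw [h1']
  set g := gFun x
  have e1 : 1 - g ≠ 0 := by linarith
  have e2 : 2 - g ≠ 0 := by linarith
  have e3 : 2 * g + g ^ 2 / (1 - g) = g * (2 - g) / (1 - g) := by field_simp; ring
  rw [e3]
  field_simp
  ring

theorem hasDerivAt_tauFun (J h m : ℝ) : HasDerivAt (tauFun J h) (2 * J) m := by
  unfold tauFun
  exact ((((hasDerivAt_id m).const_mul 2).sub_const 1).mul_const J).add_const h
    |>.congr_deriv (by ring)

theorem hasDerivAt_gFun_tauFun (J h m : ℝ) :
    HasDerivAt (fun m => gFun (tauFun J h m))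
      (4 * J * (gFun (tauFun J h m) * (1 - gFun (tauFun J h m)) / (2 - gFun (tauFun J h m)))) m :=
  ((hasDerivAt_gFun (tauFun J h m)).comp m (hasDerivAt_tauFun J h m)).congr_deriv (by ring)

theorem hasDerivAt_ptilde (J h m : ℝ) :
    HasDerivAt (ptilde J h) (2 * J * (gFun (tauFun J h m) - m)) m := by
  have hg := hasDerivAt_gFun_tauFun J h m
  have hlt := gFun_lt_one (tauFun J h m)
  have hd := ((hasDerivAt_pow 2 m).const_mul (-J)).sub
    (((hg.const_sub 1).add ((hg.const_sub 1).log (by linarith))).div_const 2)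
  refine hd.congr_deriv ?_
  set g := gFun (tauFun J h m)
  have e1 : 1 - g ≠ 0 := by linarith
  have e2 : 2 - g ≠ 0 := by linarith
  field_simp
  ring

theorem drift_eq_mul_sub (J h m : ℝ) :
    drift J h m = (gFun (tauFun J h m) - m) *
      (gFun (tauFun J h m) + m + Real.exp (2 * tauFun J h m)) := by
  rw [drift]
  linear_combination -(gFun_spec (tauFun J h m)).2

/-- The fourth derivative of `𝑝̃` in terms of `g ∘ τ`. -/
theorem iteratedDeriv_four_ptilde (J h m : ℝ) :
    iteratedDeriv 4 (ptilde J h) m =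
      2 * J * (4 * J) ^ 3 * ((gFun (tauFun J h m) * (1 - gFun (tauFun J h m))
          / (2 - gFun (tauFun J h m))) *
        (-4 * (gFun (tauFun J h m) * (1 - gFun (tauFun J h m)) / (2 - gFun (tauFun J h m)))
            / (2 - gFun (tauFun J h m)) ^ 3 +
          ((2 - 4 * gFun (tauFun J h m) + gFun (tauFun J h m) ^ 2)
            / (2 - gFun (tauFun J h m)) ^ 2) ^ 2)) := by
  have d1 : deriv (ptilde J h) = fun m => 2 * J * (gFun (tauFun J h m) - m) :=
    funext fun m => (hasDerivAt_ptilde J h m).deriv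
  have d2 : deriv (fun m => 2 * J * (gFun (tauFun J h m) - m)) = fun m =>
      2 * J * (4 * J * (gFun (tauFun J h m) * (1 - gFun (tauFun J h m))
        / (2 - gFun (tauFun J h m))) - 1) :=
    funext fun m => (((hasDerivAt_gFun_tauFun J h m).sub (hasDerivAt_id m)).const_mul _).deriv
  have hquot : ∀ m, HasDerivAt (fun m => gFun (tauFun J h m) * (1 - gFun (tauFun J h m))
        / (2 - gFun (tauFun J h m)))
      (4 * J * ((2 - 4 * gFun (tauFun J h m) + gFun (tauFun J h m) ^ 2)
        / (2 - gFun (tauFun J h m)) ^ 2 * (gFun (tauFun J h m) * (1 - gFun (tauFun J h m))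
        / (2 - gFun (tauFun J h m))))) m := by
    intro m
    have hg := hasDerivAt_gFun_tauFun J h m
    have hlt := gFun_lt_one (tauFun J h m)
    refine ((hg.mul (hg.const_sub 1)).div (hg.const_sub 2) (by linarith)).congr_deriv ?_
    simp only [Pi.mul_apply]
    have e2 : 2 - gFun (tauFun J h m) ≠ 0 := by linarith
    field_simp
    ring
  have d3 : deriv (fun m => 2 * J * (4 * J * (gFun (tauFun J h m) * (1 - gFun (tauFun J h m))
        / (2 - gFun (tauFun J h m))) - 1)) = fun m => 2 * J * (4 * J * (4 * J *
      ((2 - 4 * gFun (tauFun J h m) + gFun (tauFun J h m) ^ 2)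
        / (2 - gFun (tauFun J h m)) ^ 2 * (gFun (tauFun J h m) * (1 - gFun (tauFun J h m))
        / (2 - gFun (tauFun J h m)))))) :=
    funext fun m => ((((hquot m).const_mul _).sub_const 1).const_mul _).deriv
  rw [iteratedDeriv_succ', iteratedDeriv_succ', iteratedDeriv_succ', iteratedDeriv_one, d1, d2, d3]
  have hg := hasDerivAt_gFun_tauFun J h m
  have hlt := gFun_lt_one (tauFun J h m)
  have e2 : 2 - gFun (tauFun J h m) ≠ 0 := by linarith
  have hquot2 := (((hg.const_mul 4).const_sub 2).add (hg.pow 2)).div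
    ((hg.const_sub 2).pow 2) (pow_ne_zero 2 e2)
  refine ((((hquot2.mul (hquot m)).const_mul (4 * J)).const_mul (4 * J)).const_mul
    (2 * J)).deriv.trans ?_
  simp only [Pi.add_apply, Pi.div_apply, Pi.pow_apply]
  field_simp
  ring

namespace IsCritical

variable {J h mc : ℝ}

theorem gFun_tauFun_mc (hc : IsCritical J h mc) : gFun (tauFun J h mc) = mc := by
  have h1 := drift_eq_mul_sub J h mc
  rw [hc.drift_mc] at h1
  have := (gFun_spec (tauFun J h mc)).1
  have := Real.exp_pos (2 * tauFun J h mc)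
  have := hc.mc_mem.1
  rcases mul_eq_zero.1 h1.symm with h | h <;> linarith

theorem iteratedDeriv_four (hc : IsCritical J h mc) :
    iteratedDeriv 4 (ptilde J h) mc = -(24 + 17 * Real.sqrt 2) / 2 := by
  have h2 : Real.sqrt 2 ^ 2 = 2 := Real.sq_sqrt (by norm_num)
  have h0 : 2 - 4 * mc + mc ^ 2 = 0 := by
    rw [hc.mc_eq]; linear_combination h2
  have hp : 0 < Real.sqrt 2 := by positivity
  rw [iteratedDeriv_four_ptilde, hc.gFun_tauFun_mc, h0]
  have hq : mc * (1 - mc) / (2 - mc) = 3 - 2 * Real.sqrt 2 := by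
    rw [hc.mc_eq, div_eq_iff (by linarith)]
    linear_combination h2
  have hr3 : (2 - mc) ^ 3 = 2 * Real.sqrt 2 := by
    rw [hc.mc_eq]; linear_combination Real.sqrt 2 * h2
  have h1 : (3 + 2 * Real.sqrt 2) * (3 - 2 * Real.sqrt 2) = 1 := by linear_combination -4 * h2
  calc _ = -((3 + 2 * Real.sqrt 2) * (3 - 2 * Real.sqrt 2)) ^ 2 * (3 + 2 * Real.sqrt 2) ^ 2
        / Real.sqrt 2 := by
        rw [hq, hr3, hc.J_eq]
        field_simp
        ring
    _ = _ := by
        rw [h1, div_eq_div_iff hp.ne' (by norm_num)]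
        linear_combination 9 * h2

theorem ptilde_lt (hc : IsCritical J h mc) {m : ℝ} (hm : m ∈ Set.Icc (0 : ℝ) 1) (hne : m ≠ mc) :
    ptilde J h m < ptilde J h mc := by
  have hcont : Continuous (ptilde J h) :=
    continuous_iff_continuousAt.2 fun x => (hasDerivAt_ptilde J h x).continuousAt
  have hfac : ∀ x, 0 ≤ x → 0 < gFun (tauFun J h x) + x + Real.exp (2 * tauFun J h x) := by
    intro x hx
    have := (gFun_spec (tauFun J h x)).1
    positivity
  have hJ := hc.J_pos
  rcases lt_or_gt_of_ne hne with hlt | hlt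
  · refine strictMonoOn_of_deriv_pos (convex_Icc m mc) hcont.continuousOn (fun x hx => ?_)
      (Set.left_mem_Icc.2 hlt.le) (Set.right_mem_Icc.2 hlt.le) hlt
    rw [interior_Icc] at hx
    have hx0 : 0 ≤ x := hm.1.trans hx.1.le
    rw [(hasDerivAt_ptilde J h x).deriv]
    have hd := hc.drift_pos hx0 hx.2
    rw [drift_eq_mul_sub] at hd
    have := pos_of_mul_pos_left hd (hfac x hx0).le
    positivity
  · refine strictAntiOn_of_deriv_neg (convex_Icc mc m) hcont.continuousOn (fun x hx => ?_)
      (Set.left_mem_Icc.2 hlt.le) (Set.right_mem_Icc.2 hlt.le) hlt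
    rw [interior_Icc] at hx
    have hx0 : 0 ≤ x := hc.mc_mem.1.le.trans hx.1.le
    rw [(hasDerivAt_ptilde J h x).deriv]
    have hd := hc.drift_neg hx.1
    rw [drift_eq_mul_sub] at hd
    have := neg_of_mul_neg_left hd (hfac x hx0).le
    nlinarith

end IsCritical

/-! ### Detailed balance for the removal of a dimer -/

/-- Remove the dimer covering the vertex `i`, if there is one. -/
def Dimer.unmatch {N : ℕ} (D : Dimer N) (i : Fin N) : Dimer N :=
  ⟨fun x => if x = i ∨ x = D.1 i then x else D.1 x, fun x => by
    have h1 := D.2 x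
    have h2 := D.2 i
    grind⟩

/-- Join the two monomers `i` and `j` by a dimer. -/
def Dimer.join {N : ℕ} (D : Dimer N) (i j : Fin N) (hi : D.1 i = i) (hj : D.1 j = j) : Dimer N :=
  ⟨fun x => if x = i then j else if x = j then i else D.1 x, fun x => by
    have h1 := D.2 x
    grind⟩

theorem mem_monomers {N : ℕ} (D : Dimer N) (i : Fin N) : i ∈ monomers D ↔ D.1 i = i := by
  simp [monomers]

theorem card_monomers_unmatch {N : ℕ} (D : Dimer N) (i : Fin N) (hi : D.1 i ≠ i) :
    (monomers (D.unmatch i)).card = (monomers D).card + 2 := by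
  have h2 := D.2 i
  have : monomers (D.unmatch i) = insert i (insert (D.1 i) (monomers D)) := by
    ext x
    simp only [mem_monomers, Finset.mem_insert, Dimer.unmatch]
    grind
  rw [this, Finset.card_insert_of_notMem, Finset.card_insert_of_notMem]
  · rw [mem_monomers]; grind
  · simp only [Finset.mem_insert, mem_monomers]; grind

/-- Summing over dimer configurations with a marked covered vertex is the same as summing over
configurations with an ordered pair of marked monomers, the marked dimer being removed. -/
theorem sum_dimer_shift (N : ℕ) (F : ℝ → ℝ) :
    ∑ D : Dimer N, ((N : ℝ) - (monomers D).card) * F (monomers D).card =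
      ∑ D : Dimer N, ((monomers D).card : ℝ) * ((monomers D).card - 1) *
        F ((monomers D).card - 2) := by
  have hL : ∀ D : Dimer N, ((N : ℝ) - (monomers D).card) * F (monomers D).card =
      ∑ _i ∈ (monomers D)ᶜ, F (monomers D).card := by
    intro D
    rw [Finset.sum_const, nsmul_eq_mul, Finset.card_compl, Fintype.card_fin,
      Nat.cast_sub (by simpa using Finset.card_le_univ (monomers D))]
  have hR : ∀ D : Dimer N, ((monomers D).card : ℝ) * ((monomers D).card - 1) *
        F ((monomers D).card - 2) =
      ∑ _p ∈ (monomers D).offDiag, F ((monomers D).card - 2) := by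
    intro D
    rw [Finset.sum_const, nsmul_eq_mul, Finset.offDiag_card,
      Nat.cast_sub (Nat.le_mul_self _), Nat.cast_mul]
    ring
  simp_rw [hL, hR]
  rw [Finset.sum_sigma', Finset.sum_sigma']
  refine Finset.sum_bij' (fun a _ => ⟨a.1.unmatch a.2, (a.2, a.1.1 a.2)⟩)
    (fun b hb => ⟨b.1.join b.2.1 b.2.2
      ((mem_monomers _ _).1 (Finset.mem_offDiag.1 (Finset.mem_sigma.1 hb).2).1)
      ((mem_monomers _ _).1 (Finset.mem_offDiag.1 (Finset.mem_sigma.1 hb).2).2.1), b.2.1⟩)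
    ?_ ?_ ?_ ?_ ?_
  · rintro ⟨D, i⟩ ha
    have hi : D.1 i ≠ i := by simpa [mem_monomers] using ha
    simp only [Finset.mem_sigma, Finset.mem_univ, Finset.mem_offDiag, mem_monomers, true_and,
      Dimer.unmatch]
    grind
  · rintro ⟨D, i, j⟩ hb
    obtain ⟨hi, hj, hij⟩ : D.1 i = i ∧ D.1 j = j ∧ i ≠ j := by
      simpa [mem_monomers] using hb
    simp only [Finset.mem_sigma, Finset.mem_univ, Finset.mem_compl, mem_monomers, true_and,
      Dimer.join]
    grind
  · rintro ⟨D, i⟩ ha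
    have hi : D.1 i ≠ i := by simpa [mem_monomers] using ha
    have h2 := D.2 i
    simp only [Sigma.mk.injEq, heq_eq_eq, and_true]
    apply Subtype.ext
    funext x
    have h1 := D.2 x
    simp only [Dimer.join, Dimer.unmatch]
    grind
  · rintro ⟨D, i, j⟩ hb
    obtain ⟨hi, hj, hij⟩ : D.1 i = i ∧ D.1 j = j ∧ i ≠ j := by
      simpa [mem_monomers] using hb
    have hD : (D.join i j hi hj).unmatch i = D := by
      apply Subtype.ext
      funext x
      simp only [Dimer.join, Dimer.unmatch]
      grind
    simp only [hD, Sigma.mk.injEq, heq_eq_eq, true_and]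
    simp [Dimer.join]
  · rintro ⟨D, i⟩ ha
    have hi : D.1 i ≠ i := by simpa [mem_monomers] using ha
    simp only [card_monomers_unmatch D i hi]
    push_cast
    ring_nf

/-- The Gibbs average identity behind Stein's method: the weight ratio of two configurations that
differ by one dimer is explicit. -/
theorem sum_wDim_shift {N : ℕ} (hN : 1 ≤ N) (J h : ℝ) (G : ℝ → ℝ) :
    ∑ D : Dimer N, wDim N J h D *
        ((1 - mDim D) * Real.exp (2 * tauFun J h (mDim D)) * Real.exp (4 * J / N) *
          G (monomers D).card) =
      ∑ D : Dimer N, wDim N J h D *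
        (mDim D * (mDim D - 1 / N) * G ((monomers D).card - 2)) := by
  have hN0 : (0 : ℝ) < N := by exact_mod_cast hN
  set W : ℝ → ℝ := fun k => Real.exp (N * (J * (k / N) ^ 2 + bIMD N J h * (k / N))) with hW
  have key := sum_dimer_shift N (fun k => W (k + 2) * G k)
  have hshift : ∀ k : ℝ, W (k + 2) = W k * (N * (Real.exp (2 * tauFun J h (k / N)) *
      Real.exp (4 * J / N))) := by
    intro k
    suffices W (k + 2) = W k * (Real.exp (Real.log N) * (Real.exp (2 * tauFun J h (k / N)) *
        Real.exp (4 * J / N))) by rwa [Real.exp_log hN0] at this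
    simp only [hW]
    rw [← Real.exp_add, ← Real.exp_add, ← Real.exp_add]
    congr 1
    rw [bIMD, tauFun]
    field_simp
    ring
  have hdiv : ∀ a b : ℝ, a = b → a / (N : ℝ) ^ 2 = b / (N : ℝ) ^ 2 := fun a b hab => by rw [hab]
  have key' := hdiv _ _ key
  rw [Finset.sum_div, Finset.sum_div] at key'
  calc _ = _ := ?_
    _ = _ := key'
    _ = _ := ?_
  · refine Finset.sum_congr rfl fun D _ => ?_
    have : wDim N J h D = W (monomers D).card := rfl
    rw [this, hshift, mDim]
    field_simp
  · refine Finset.sum_congr rfl fun D _ => ?_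
    have : wDim N J h D = W (monomers D).card := rfl
    rw [this, mDim, sub_add_cancel]
    field_simp

/-! ### Stein's equation for the density proportional to `e^{-b t⁴}` -/

theorem integrable_exp_neg_mul_pow_four {b : ℝ} (hb : 0 < b) :
    Integrable fun t : ℝ => Real.exp (-b * t ^ 4) := by
  refine ((integrable_exp_neg_mul_sq (b := 2 * b) (by positivity)).const_mul
    (Real.exp b)).mono' (by fun_prop) (Filter.Eventually.of_forall fun t => ?_)
  rw [Real.norm_eq_abs, abs_of_pos (Real.exp_pos _), ← Real.exp_add]
  apply Real.exp_le_exp.2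
  nlinarith [sq_nonneg (t ^ 2 - 1)]

theorem hasDerivAt_integral_Iic {ρ : ℝ → ℝ} (hρ : Integrable ρ) (hc : Continuous ρ) (x : ℝ) :
    HasDerivAt (fun x => ∫ t in Set.Iic x, ρ t) (ρ x) x := by
  have h1 : (fun x => ∫ t in Set.Iic x, ρ t)
      = fun x => (∫ t in Set.Iic (0 : ℝ), ρ t) + ∫ t in (0 : ℝ)..x, ρ t := by
    funext x
    rw [← intervalIntegral.integral_Iic_sub_Iic hρ.integrableOn hρ.integrableOn]
    ring
  rw [h1]
  exact (intervalIntegral.integral_hasDerivAt_right (hc.intervalIntegrable _ _)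
    (hc.stronglyMeasurableAtFilter _ _) hc.continuousAt).const_add _

theorem hasDerivAt_exp_neg_mul_pow_four (b x : ℝ) :
    HasDerivAt (fun t : ℝ => Real.exp (-b * t ^ 4))
      (-(4 * b * x ^ 3) * Real.exp (-b * x ^ 4)) x :=
  ((hasDerivAt_pow 4 x).const_mul (-b)).exp.congr_deriv (by push_cast; ring)

theorem mul_integral_Ioi_exp_neg_mul_pow_four_le {b : ℝ} (hb : 0 < b) {x : ℝ} (hx : 0 ≤ x) :
    4 * b * x ^ 3 * ∫ t in Set.Ioi x, Real.exp (-b * t ^ 4) ≤ Real.exp (-b * x ^ 4) := by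
  have hlim : Filter.Tendsto (fun t : ℝ => Real.exp (-b * t ^ 4)) Filter.atTop (nhds 0) := by
    apply Real.tendsto_exp_atBot.comp
    exact (Filter.tendsto_pow_atTop (by norm_num)).const_mul_atTop_of_neg (by linarith)
  have hneg : ∀ t ∈ Set.Ioi x, -(4 * b * t ^ 3) * Real.exp (-b * t ^ 4) ≤ 0 := by
    intro t ht
    have : 0 ≤ t := hx.trans (le_of_lt ht)
    have : 0 ≤ 4 * b * t ^ 3 * Real.exp (-b * t ^ 4) := by positivity
    linarith
  have hexp_int := integrableOn_Ioi_deriv_of_nonpos'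
    (fun t _ => hasDerivAt_exp_neg_mul_pow_four b t) hneg hlim
  have hval := integral_Ioi_of_hasDerivAt_of_nonpos'
    (fun t _ => hasDerivAt_exp_neg_mul_pow_four b t) hneg hlim
  have hle : (∫ t in Set.Ioi x, 4 * b * x ^ 3 * Real.exp (-b * t ^ 4))
      ≤ ∫ t in Set.Ioi x, -(-(4 * b * t ^ 3) * Real.exp (-b * t ^ 4)) := by
    refine setIntegral_mono_on ((integrable_exp_neg_mul_pow_four hb).integrableOn.const_mul _)
      hexp_int.neg measurableSet_Ioi fun t ht => ?_
    have h3 : x ^ 3 ≤ t ^ 3 := pow_le_pow_left₀ hx (le_of_lt ht) 3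
    calc _ ≤ 4 * b * t ^ 3 * Real.exp (-b * t ^ 4) := by gcongr
      _ = _ := by ring
  rw [integral_const_mul, integral_neg, hval] at hle
  linarith

theorem integral_Iic_eq_integral_Ioi_neg (b x : ℝ) :
    ∫ t in Set.Iic x, Real.exp (-b * t ^ 4) = ∫ t in Set.Ioi (-x), Real.exp (-b * t ^ 4) := by
  rw [← integral_comp_neg_Iic]
  refine setIntegral_congr_fun measurableSet_Iic fun t _ => ?_
  rw [(by decide : Even 4).neg_pow]

/-- A solution of Stein's equation `f' = 4 b x³ f + 1_{x ≤ z} - F(z)`, written in the primitive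
form that is differentiable everywhere, with bounds uniform in `z`. -/
theorem exists_stein_solution {b : ℝ} (hb : 0 < b) :
    ∃ C, 0 ≤ C ∧ ∀ z : ℝ, ∃ f : ℝ → ℝ,
      (∀ x, |f x| ≤ C) ∧ (∀ x, |4 * b * x ^ 3 * f x| ≤ 1) ∧
      ∀ x, HasDerivAt (fun x => f x - min x z +
        (∫ t in Set.Iic z, Real.exp (-b * t ^ 4)) / (∫ t : ℝ, Real.exp (-b * t ^ 4)) * x)
        (4 * b * x ^ 3 * f x) x := by
  have hexp_int := integrable_exp_neg_mul_pow_four hb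
  have htail := fun x hx => mul_integral_Ioi_exp_neg_mul_pow_four_le hb (x := x) hx
  have hrefl := integral_Iic_eq_integral_Ioi_neg b
  have hder := hasDerivAt_exp_neg_mul_pow_four b
  have hsplit : ∀ x : ℝ, (∫ t in Set.Iic x, Real.exp (-b * t ^ 4))
      + ∫ t in Set.Ioi x, Real.exp (-b * t ^ 4) = ∫ t : ℝ, Real.exp (-b * t ^ 4) :=
    fun x => intervalIntegral.integral_Iic_add_Ioi hexp_int.integrableOn hexp_int.integrableOn
  have hI := hasDerivAt_integral_Iic hexp_int (by fun_prop)
  set T := ∫ t : ℝ, Real.exp (-b * t ^ 4) with hT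
  have hT0 : 0 < T := integral_exp_pos hexp_int
  set ρ : ℝ → ℝ := fun t => Real.exp (-b * t ^ 4) with hρ
  have hρ0 : ∀ x, 0 < ρ x := fun x => Real.exp_pos _
  set I : ℝ → ℝ := fun x => ∫ t in Set.Iic x, ρ t with hIdef
  have hI0 : ∀ x, 0 ≤ I x := fun x => integral_nonneg fun t => (hρ0 t).le
  have hT_sub : ∀ x, T - I x = ∫ t in Set.Ioi x, ρ t := fun x => by
    rw [← hsplit x]; simp [hIdef, hρ]
  have hIc0 : ∀ x, 0 ≤ T - I x := fun x => by
    rw [hT_sub]; exact integral_nonneg fun t => (hρ0 t).le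
  have hmono : Monotone I := monotone_of_hasDerivAt_nonneg hI fun x => (hρ0 x).le
  have hIcont : Continuous I := continuous_iff_continuousAt.2 fun x => (hI x).continuousAt
  have hprod : ∀ x, |4 * b * x ^ 3| * (I x * (T - I x)) ≤ T * ρ x := by
    intro x
    rcases le_total 0 x with hx | hx
    · rw [abs_of_nonneg (by positivity)]
      have h1 := htail x hx
      rw [← hT_sub] at h1
      have h2 : I x ≤ T := by linarith [hIc0 x]
      calc _ = I x * (4 * b * x ^ 3 * (T - I x)) := by ring
        _ ≤ T * ρ x := mul_le_mul h2 h1 (mul_nonneg (by positivity) (hIc0 x)) hT0.le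
    · have h1 := htail (-x) (by linarith)
      have h3 : I x = ∫ t in Set.Ioi (-x), ρ t := hrefl x
      rw [← h3, (by decide : Even 4).neg_pow] at h1
      have h2 : T - I x ≤ T := by linarith [hI0 x]
      have h4 : |4 * b * x ^ 3| = 4 * b * (-x) ^ 3 := by
        have : 0 ≤ 4 * b * (-x) ^ 3 := by
          have : 0 ≤ -x := by linarith
          positivity
        rw [← abs_neg, ← abs_of_nonneg this]
        congr 1
        ring
      rw [h4]
      calc _ = (T - I x) * (4 * b * (-x) ^ 3 * I x) := by ring
        _ ≤ T * ρ x := by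
          refine mul_le_mul h2 h1 ?_ hT0.le
          rw [← h4]
          exact mul_nonneg (abs_nonneg _) (hI0 x)
  set C := T * Real.exp b + 1 / (4 * b) with hC
  have hC0 : 0 ≤ C := by positivity
  have hprod' : ∀ x, I x * (T - I x) ≤ C * (T * ρ x) := by
    intro x
    have hTρ : 0 ≤ T * ρ x := mul_nonneg hT0.le (hρ0 x).le
    rcases le_total |x| 1 with hx | hx
    · have h1 : 1 ≤ Real.exp b * ρ x := by
        simp only [hρ]
        rw [← Real.exp_add, ← Real.exp_zero]
        apply Real.exp_le_exp.2
        have : x ^ 4 ≤ 1 := by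
          rw [← (by decide : Even 4).pow_abs]
          exact pow_le_one₀ (abs_nonneg _) hx
        nlinarith
      have h2 : I x * (T - I x) ≤ T * T :=
        mul_le_mul (by linarith [hIc0 x]) (by linarith [hI0 x]) (hIc0 x) hT0.le
      calc _ ≤ T * T := h2
        _ ≤ T * T * (Real.exp b * ρ x) := le_mul_of_one_le_right (by positivity) h1
        _ = T * Real.exp b * (T * ρ x) := by ring
        _ ≤ C * (T * ρ x) := by
          gcongr
          rw [hC]
          have : 0 < 1 / (4 * b) := by positivity
          linarith
    · have h1 := hprod x
      have h2 : 4 * b ≤ |4 * b * x ^ 3| := by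
        rw [abs_mul, abs_of_pos (by positivity), abs_pow]
        exact le_mul_of_one_le_right (by positivity) (one_le_pow₀ hx)
      have h3 : 4 * b * (I x * (T - I x)) ≤ T * ρ x :=
        (mul_le_mul_of_nonneg_right h2 (mul_nonneg (hI0 x) (hIc0 x))).trans h1
      calc I x * (T - I x) = 1 / (4 * b) * (4 * b * (I x * (T - I x))) := by field_simp
        _ ≤ 1 / (4 * b) * (T * ρ x) := by gcongr
        _ ≤ C * (T * ρ x) := by
          gcongr
          rw [hC]
          have : 0 < T * Real.exp b := by positivity
          linarith
  refine ⟨C, hC0, fun z => ?_⟩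
  set f : ℝ → ℝ := fun x => I (min x z) * (T - I (max x z)) / (T * ρ x) with hf
  have hnum : ∀ x, 0 ≤ I (min x z) * (T - I (max x z)) := fun x => mul_nonneg (hI0 _) (hIc0 _)
  have hnum_le : ∀ x, I (min x z) * (T - I (max x z)) ≤ I x * (T - I x) := fun x =>
    mul_le_mul (hmono (min_le_left _ _)) (by linarith [hmono (le_max_left x z)]) (hIc0 _) (hI0 _)
  have hTρ : ∀ x, 0 < T * ρ x := fun x => mul_pos hT0 (hρ0 x)
  have hf0 : ∀ x, 0 ≤ f x := fun x => div_nonneg (hnum x) (hTρ x).le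
  have hfc : Continuous f := by
    refine Continuous.div ?_ ?_ fun x => (hTρ x).ne'
    · exact (hIcont.comp (by fun_prop)).mul (continuous_const.sub (hIcont.comp (by fun_prop)))
    · fun_prop
  refine ⟨f, fun x => ?_, fun x => ?_, ?_⟩
  · rw [abs_of_nonneg (hf0 x), hf]
    exact (div_le_iff₀ (hTρ x)).2 ((hnum_le x).trans (hprod' x))
  · rw [abs_mul, abs_of_nonneg (hf0 x), hf]
    simp only
    rw [← mul_div_assoc, div_le_one (hTρ x)]
    exact (mul_le_mul_of_nonneg_left (hnum_le x) (abs_nonneg _)).trans (hprod x)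
  · refine hasDerivAt_of_hasDerivAt_of_ne' (x := z) (fun x hx => ?_) ?_ ?_
    · rcases lt_or_gt_of_ne hx with hlt | hlt
      · have heq : (fun x => f x - min x z + I z / T * x) =ᶠ[nhds x]
            fun x => I x * (T - I z) / (T * ρ x) - x + I z / T * x := by
          filter_upwards [Iio_mem_nhds hlt] with y hy
          simp only [hf, min_eq_left (le_of_lt (show y < z from hy)),
            max_eq_right (le_of_lt (show y < z from hy))]
        refine HasDerivAt.congr_of_eventuallyEq ?_ heq
        refine (((((hI x).mul_const (T - I z)).div ((hder x).const_mul T) (hTρ x).ne').sub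
          (hasDerivAt_id x)).add ((hasDerivAt_id x).const_mul (I z / T))).congr_deriv ?_
        have := (hρ0 x).ne'
        simp only [hf, min_eq_left hlt.le, max_eq_right hlt.le]
        change (ρ x * (T - I z) * (T * ρ x) - I x * (T - I z) * (T * (-(4 * b * x ^ 3) * ρ x))) /
          (T * ρ x) ^ 2 - 1 + I z / T * 1 = _
        field_simp
        ring
      · have heq : (fun x => f x - min x z + I z / T * x) =ᶠ[nhds x]
            fun x => I z * (T - I x) / (T * ρ x) - z + I z / T * x := by
          filter_upwards [Ioi_mem_nhds hlt] with y hy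
          simp only [hf, min_eq_right (le_of_lt (show z < y from hy)),
            max_eq_left (le_of_lt (show z < y from hy))]
        refine HasDerivAt.congr_of_eventuallyEq ?_ heq
        refine ((((((hI x).const_sub T).const_mul (I z)).div ((hder x).const_mul T)
          (hTρ x).ne').sub_const z).add
            ((hasDerivAt_id x).const_mul (I z / T))).congr_deriv ?_
        have := (hρ0 x).ne'
        simp only [hf, min_eq_right hlt.le, max_eq_left hlt.le]
        change (I z * -ρ x * (T * ρ x) - I z * (T - I x) * (T * (-(4 * b * x ^ 3) * ρ x))) /
          (T * ρ x) ^ 2 + I z / T * 1 = _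
        field_simp
        ring
    · fun_prop
    · fun_prop

/-- Finite-difference form of Stein's equation. -/
theorem exists_stein_solution_sub {b : ℝ} (hb : 0 < b) :
    ∃ C, 0 ≤ C ∧ ∀ z : ℝ, ∃ f : ℝ → ℝ,
      (∀ x, |f x| ≤ C) ∧ (∀ x y, |f x - f y| ≤ 3 * |x - y|) ∧
      ∀ x δ, 0 ≤ δ → δ ≤ 2 →
        |f x - f (x - δ) - (min x z - min (x - δ) z)
          + δ * ((∫ t in Set.Iic z, Real.exp (-b * t ^ 4)) / ∫ t : ℝ, Real.exp (-b * t ^ 4))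
          - δ * (4 * b * x ^ 3 * f x)| ≤ C * δ ^ 2 * (1 + x ^ 4) := by
  obtain ⟨C, hC, hsol⟩ := exists_stein_solution hb
  refine ⟨C + 4 * b * (3 * (4 + C * 24)), by positivity, fun z => ?_⟩
  obtain ⟨f, hf, hxf, hder⟩ := hsol z
  have hexp_int := integrable_exp_neg_mul_pow_four hb
  have hT0 : 0 < ∫ t : ℝ, Real.exp (-b * t ^ 4) := integral_exp_pos hexp_int
  have hF0 : 0 ≤ (∫ t in Set.Iic z, Real.exp (-b * t ^ 4)) / ∫ t : ℝ, Real.exp (-b * t ^ 4) :=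
    div_nonneg (integral_nonneg fun t => (Real.exp_pos _).le) hT0.le
  have hF1 : (∫ t in Set.Iic z, Real.exp (-b * t ^ 4)) / ∫ t : ℝ, Real.exp (-b * t ^ 4) ≤ 1 :=
    (div_le_one hT0).2 (setIntegral_le_integral hexp_int
      (Filter.Eventually.of_forall fun t => (Real.exp_pos _).le))
  set F := (∫ t in Set.Iic z, Real.exp (-b * t ^ 4)) / ∫ t : ℝ, Real.exp (-b * t ^ 4)
  have hlip : ∀ x y, |f x - f y| ≤ 3 * |x - y| := by
    intro x y
    have h1 := convex_univ.norm_image_sub_le_of_norm_hasDerivWithin_le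
      (fun t _ => (hder t).hasDerivWithinAt) (fun t _ => hxf t)
      (Set.mem_univ y) (Set.mem_univ x)
    simp only [Real.norm_eq_abs, one_mul] at h1
    have h2 : |min x z - min y z| ≤ |x - y| := by
      simpa using abs_min_sub_min_le_max x z y z
    have h3 : |F * (x - y)| ≤ |x - y| := by
      rw [abs_mul, abs_of_nonneg hF0]
      exact mul_le_of_le_one_left (abs_nonneg _) hF1
    calc |f x - f y| = |(f x - min x z + F * x - (f y - min y z + F * y))
          + (min x z - min y z) - F * (x - y)| := by congr 1; ring
      _ ≤ |(f x - min x z + F * x - (f y - min y z + F * y))|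
          + |min x z - min y z| + |F * (x - y)| := (abs_sub _ _).trans (by gcongr; exact abs_add_le _ _)
      _ ≤ _ := by linarith
  refine ⟨f, fun x => (hf x).trans (by have : 0 ≤ 4 * b * (3 * (4 + C * 24)) := by positivity
                                       linarith), hlip, fun x δ hδ hδ2 => ?_⟩
  have hx4 : 0 ≤ x ^ 4 := by positivity
  have hx3 : |x| ^ 3 ≤ 1 + x ^ 4 := by
    rw [← (by decide : Even 4).pow_abs]
    nlinarith [sq_nonneg (|x| ^ 2 - |x|), sq_nonneg (|x| - 1), sq_nonneg (|x| ^ 2 - 1),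
      abs_nonneg x, sq_nonneg (|x|)]
  have hx2 : |x| ^ 2 ≤ 1 + x ^ 4 := by
    rw [← (by decide : Even 4).pow_abs]
    nlinarith [sq_nonneg (|x| ^ 2 - 1)]
  have hx1 : |x| ≤ 1 + x ^ 4 := by nlinarith [sq_nonneg (|x| - 1)]
  have hdiff : ∀ t ∈ Set.Icc (x - δ) x,
      |4 * b * t ^ 3 * f t - 4 * b * x ^ 3 * f x| ≤ 4 * b * (3 * (4 + C * 24)) * δ * (1 + x ^ 4) := by
    intro t ht
    have htx : |t - x| ≤ δ := by
      rw [abs_le]; constructor <;> linarith [ht.1, ht.2]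
    have ht2 : |t| ≤ |x| + 2 := by
      have : |t| ≤ |t - x| + |x| := by simpa using abs_add_le (t - x) x
      linarith
    have hq : |t ^ 2 + t * x + x ^ 2| ≤ 3 * (24 * (1 + x ^ 4)) := by
      have e1 : |t ^ 2| ≤ 24 * (1 + x ^ 4) := by
        rw [abs_pow]
        have : |t| ^ 2 ≤ (|x| + 2) ^ 2 := by gcongr
        nlinarith
      have e2 : |x ^ 2| ≤ 24 * (1 + x ^ 4) := by rw [abs_pow]; linarith
      have e3 : |t * x| ≤ 24 * (1 + x ^ 4) := by
        rw [abs_mul]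
        have : |t| * |x| ≤ (|x| + 2) * |x| := by gcongr
        nlinarith
      have := abs_add_three (t ^ 2) (t * x) (x ^ 2)
      linarith
    have hcube : |t ^ 3 - x ^ 3| ≤ δ * (3 * (24 * (1 + x ^ 4))) := by
      have : t ^ 3 - x ^ 3 = (t - x) * (t ^ 2 + t * x + x ^ 2) := by ring
      rw [this, abs_mul]
      exact mul_le_mul htx hq (abs_nonneg _) hδ
    have hfd : |f t - f x| ≤ 3 * δ := (hlip t x).trans (by linarith)
    calc |4 * b * t ^ 3 * f t - 4 * b * x ^ 3 * f x|
        = 4 * b * |(t ^ 3 - x ^ 3) * f t + x ^ 3 * (f t - f x)| := by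
          rw [← abs_of_pos (show 0 < 4 * b by positivity), ← abs_mul,
            abs_of_pos (show 0 < 4 * b by positivity)]
          congr 1; ring
      _ ≤ 4 * b * (|t ^ 3 - x ^ 3| * |f t| + |x| ^ 3 * |f t - f x|) := by
          gcongr
          refine (abs_add_le _ _).trans ?_
          rw [abs_mul, abs_mul, abs_pow]
      _ ≤ 4 * b * (δ * (3 * (24 * (1 + x ^ 4))) * C + (1 + x ^ 4) * (3 * δ)) := by
          gcongr
          exact hf t
      _ ≤ 4 * b * (δ * (3 * (24 * (1 + x ^ 4))) * C + (1 + x ^ 4) * (12 * δ)) := by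
          gcongr
          norm_num
      _ = _ := by ring
  have hmv := (convex_Icc (x - δ) x).norm_image_sub_le_of_norm_hasDerivWithin_le
    (f := fun t => f t - min t z + F * t - 4 * b * x ^ 3 * f x * t)
    (f' := fun t => 4 * b * t ^ 3 * f t - 4 * b * x ^ 3 * f x * 1)
    (C := 4 * b * (3 * (4 + C * 24)) * δ * (1 + x ^ 4))
    (fun t _ => ((hder t).sub ((hasDerivAt_id t).const_mul _)).hasDerivWithinAt)
    (fun t ht => by simpa using hdiff t ht)
    (Set.left_mem_Icc.2 (by linarith)) (Set.right_mem_Icc.2 (by linarith))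
  simp only [Real.norm_eq_abs, sub_sub_cancel] at hmv
  rw [abs_of_nonneg hδ] at hmv
  calc _ = |f x - min x z + F * x - 4 * b * x ^ 3 * f x * x -
          (f (x - δ) - min (x - δ) z + F * (x - δ) - 4 * b * x ^ 3 * f x * (x - δ))| := by
        congr 1; ring
    _ ≤ 4 * b * (3 * (4 + C * 24)) * δ * (1 + x ^ 4) * δ := hmv
    _ = 4 * b * (3 * (4 + C * 24)) * δ ^ 2 * (1 + x ^ 4) := by ring
    _ ≤ _ := by
        gcongr
        linarith

/-! ### Stein's method for a finite measure with an approximate quartic drift -/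

theorem abs_sub_integral_Iic_exp_le {b : ℝ} (hb : 0 < b) (x y : ℝ) :
    |(∫ t in Set.Iic x, Real.exp (-b * t ^ 4)) - ∫ t in Set.Iic y, Real.exp (-b * t ^ 4)|
      ≤ |x - y| := by
  have h := convex_univ.norm_image_sub_le_of_norm_hasDerivWithin_le (C := 1)
    (fun t _ => (hasDerivAt_integral_Iic (integrable_exp_neg_mul_pow_four hb)
      (by fun_prop) t).hasDerivWithinAt) (fun t _ => ?_) (Set.mem_univ y) (Set.mem_univ x)
  · simpa using h
  · rw [Real.norm_eq_abs, abs_of_pos (Real.exp_pos _), Real.exp_le_one_iff]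
    have : 0 ≤ t ^ 4 := by positivity
    nlinarith

theorem kolmogorov_le_of_shift {b v₀ C M : ℝ} (hb : 0 < b) (hv₀ : 0 < v₀) (hC : 0 ≤ C) :
    ∃ K, ∀ (Ω : Type) [Fintype Ω] (p X u v : Ω → ℝ) (ε : ℝ), 0 < ε → ε ≤ 1 →
      (∀ ω, 0 ≤ p ω) → ∑ ω, p ω = 1 →
      (∀ G : ℝ → ℝ, ∑ ω, p ω * (u ω * G (X ω)) = ∑ ω, p ω * (v ω * G (X ω - 2 * ε ^ 3))) →
      (∀ ω, |u ω - v ω + v₀ * (2 * ε ^ 3) * (4 * b * X ω ^ 3)| ≤ C * ε ^ 4 * (1 + X ω ^ 4)) →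
      (∀ ω, |v ω - v₀| ≤ C * ε * (1 + X ω ^ 4)) →
      ∑ ω, p ω * X ω ^ 4 ≤ M →
      ∀ z, |∑ ω, p ω * Set.indicator {ω | X ω ≤ z} 1 ω -
        (∫ t in Set.Iic z, Real.exp (-b * t ^ 4)) / ∫ t : ℝ, Real.exp (-b * t ^ 4)| ≤ K * ε := by
  obtain ⟨C₁, hC₁, hstein⟩ := exists_stein_solution_sub hb
  have hlipF := abs_sub_integral_Iic_exp_le hb
  have hT0 : 0 < ∫ t : ℝ, Real.exp (-b * t ^ 4) :=
    integral_exp_pos (integrable_exp_neg_mul_pow_four hb)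
  set T := ∫ t : ℝ, Real.exp (-b * t ^ 4)
  set I : ℝ → ℝ := fun z => ∫ t in Set.Iic z, Real.exp (-b * t ^ 4) with hI
  set K₀ := C * C₁ + 6 * C + 4 * v₀ * C₁ with hK₀
  have hK₀0 : 0 ≤ K₀ := by positivity
  refine ⟨K₀ * (1 + M) / (2 * v₀) + 2 / T, ?_⟩
  intro Ω _ p X u v ε hε hε1 hp hsum hshift hdrift hv hM z
  set δ := 2 * ε ^ 3 with hδ
  have hδ0 : 0 < δ := by positivity
  have hε3 : ε ^ 3 ≤ 1 := pow_le_one₀ hε.le hε1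
  have hδ2 : δ ≤ 2 := by rw [hδ]; linarith
  have hM0 : 0 ≤ M :=
    (Finset.sum_nonneg fun ω _ => mul_nonneg (hp ω) (by positivity)).trans hM
  have smooth : ∀ z, |∑ ω, p ω * (min (X ω) z - min (X ω - δ) z) - δ * (I z / T)|
      ≤ K₀ * (1 + M) / v₀ * ε ^ 4 := by
    intro z
    obtain ⟨f, hf, hlip, hf'⟩ := hstein z
    have hpt : ∀ ω, |v₀ * ((min (X ω) z - min (X ω - δ) z) - δ * (I z / T)) -
        (u ω * f (X ω) - v ω * f (X ω - δ))| ≤ K₀ * ε ^ 4 * (1 + X ω ^ 4) := by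
      intro ω
      have h1 := hf' (X ω) δ hδ0.le hδ2
      have h2 := hdrift ω
      have h3 := hv ω
      have h4 := hlip (X ω) (X ω - δ)
      rw [sub_sub_cancel, abs_of_pos hδ0] at h4
      have h5 := hf (X ω)
      have hX : 0 ≤ 1 + X ω ^ 4 := by positivity
      set S := f (X ω) - f (X ω - δ) - (min (X ω) z - min (X ω - δ) z) + δ * (I z / T)
        - δ * (4 * b * X ω ^ 3 * f (X ω)) with hS
      set A := u ω - v ω + v₀ * δ * (4 * b * X ω ^ 3) with hA
      have e1 : |A * f (X ω)| ≤ C * ε ^ 4 * (1 + X ω ^ 4) * C₁ := by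
        rw [abs_mul]; exact mul_le_mul h2 h5 (abs_nonneg _) (by positivity)
      have e2 : |(v ω - v₀) * (f (X ω) - f (X ω - δ))| ≤ C * ε * (1 + X ω ^ 4) * (3 * δ) := by
        rw [abs_mul]; exact mul_le_mul h3 h4 (abs_nonneg _) (by positivity)
      have e3 : |v₀ * S| ≤ v₀ * (4 * C₁ * ε ^ 4 * (1 + X ω ^ 4)) := by
        rw [abs_mul, abs_of_pos hv₀]
        gcongr
        refine h1.trans ?_
        have : δ ^ 2 ≤ 4 * ε ^ 4 := by
          have : ε ^ 6 ≤ ε ^ 4 := pow_le_pow_of_le_one hε.le hε1 (by norm_num)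
          calc δ ^ 2 = 4 * ε ^ 6 := by rw [hδ]; ring
            _ ≤ _ := by linarith
        calc C₁ * δ ^ 2 * (1 + X ω ^ 4) ≤ C₁ * (4 * ε ^ 4) * (1 + X ω ^ 4) := by gcongr
          _ = _ := by ring
      calc _ = |-(A * f (X ω)) - (v ω - v₀) * (f (X ω) - f (X ω - δ)) - v₀ * S| := by
            congr 1; rw [hA, hS]; ring
        _ ≤ |A * f (X ω)| + |(v ω - v₀) * (f (X ω) - f (X ω - δ))| + |v₀ * S| := by
            refine (abs_sub _ _).trans ?_
            gcongr
            refine (abs_sub _ _).trans ?_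
            rw [abs_neg]
        _ ≤ _ := by
            refine (add_le_add (add_le_add e1 e2) e3).trans_eq ?_
            rw [hK₀, hδ]; ring
    have hzero : ∑ ω, p ω * (u ω * f (X ω) - v ω * f (X ω - δ)) = 0 := by
      simp_rw [mul_sub]
      rw [Finset.sum_sub_distrib, hshift f, sub_self]
    have hexp : v₀ * (∑ ω, p ω * (min (X ω) z - min (X ω - δ) z) - δ * (I z / T)) =
        ∑ ω, p ω * (v₀ * ((min (X ω) z - min (X ω - δ) z) - δ * (I z / T)) -
          (u ω * f (X ω) - v ω * f (X ω - δ))) := by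
      have : ∀ ω, p ω * (v₀ * ((min (X ω) z - min (X ω - δ) z) - δ * (I z / T)) -
          (u ω * f (X ω) - v ω * f (X ω - δ))) =
          v₀ * (p ω * (min (X ω) z - min (X ω - δ) z)) - v₀ * (δ * (I z / T)) * p ω -
          p ω * (u ω * f (X ω) - v ω * f (X ω - δ)) := fun ω => by ring
      simp_rw [this]
      rw [Finset.sum_sub_distrib, Finset.sum_sub_distrib, hzero, ← Finset.mul_sum,
        ← Finset.mul_sum, hsum]
      ring
    have hle : v₀ * |∑ ω, p ω * (min (X ω) z - min (X ω - δ) z) - δ * (I z / T)|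
        ≤ K₀ * (1 + M) * ε ^ 4 := by
      rw [← abs_of_pos hv₀, ← abs_mul, hexp]
      calc _ ≤ ∑ ω, p ω * (K₀ * ε ^ 4 * (1 + X ω ^ 4)) := by
            refine (Finset.abs_sum_le_sum_abs _ _).trans (Finset.sum_le_sum fun ω _ => ?_)
            rw [abs_mul, abs_of_nonneg (hp ω)]
            exact mul_le_mul_of_nonneg_left (hpt ω) (hp ω)
        _ = K₀ * ε ^ 4 * (∑ ω, p ω + ∑ ω, p ω * X ω ^ 4) := by
            rw [← Finset.sum_add_distrib, Finset.mul_sum]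
            exact Finset.sum_congr rfl fun ω _ => by ring
        _ ≤ K₀ * ε ^ 4 * (1 + M) := by rw [hsum]; gcongr
        _ = _ := by ring
    calc _ ≤ K₀ * (1 + M) * ε ^ 4 / v₀ := by rw [le_div_iff₀ hv₀]; linarith
      _ = _ := by ring
  have hup : δ * ∑ ω, p ω * Set.indicator {ω | X ω ≤ z} 1 ω ≤
      ∑ ω, p ω * (min (X ω) z - min (X ω - δ) z) := by
    rw [Finset.mul_sum]
    refine Finset.sum_le_sum fun ω _ => ?_
    rw [mul_left_comm]
    refine mul_le_mul_of_nonneg_left ?_ (hp ω)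
    by_cases hX : X ω ≤ z
    · rw [Set.indicator_of_mem (show ω ∈ {ω | X ω ≤ z} from hX), min_eq_left hX,
        min_eq_left (by linarith), Pi.one_apply]
      linarith
    · rw [Set.indicator_of_notMem (show ω ∉ {ω | X ω ≤ z} from hX), mul_zero, sub_nonneg]
      exact min_le_min_right _ (by linarith)
  have hlow : ∑ ω, p ω * (min (X ω) (z - δ) - min (X ω - δ) (z - δ)) ≤
      δ * ∑ ω, p ω * Set.indicator {ω | X ω ≤ z} 1 ω := by
    rw [Finset.mul_sum]
    refine Finset.sum_le_sum fun ω _ => ?_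
    rw [mul_left_comm]
    refine mul_le_mul_of_nonneg_left ?_ (hp ω)
    by_cases hX : X ω ≤ z
    · rw [Set.indicator_of_mem (show ω ∈ {ω | X ω ≤ z} from hX), Pi.one_apply, mul_one,
        min_eq_left (show X ω - δ ≤ z - δ by linarith)]
      linarith [min_le_left (X ω) (z - δ)]
    · push Not at hX
      rw [Set.indicator_of_notMem (show ω ∉ {ω | X ω ≤ z} from not_le.2 hX), mul_zero,
        min_eq_right (by linarith), min_eq_right (by linarith), sub_self]
  have hF : I z / T - I (z - δ) / T ≤ 2 / T * ε := by
    have h1 := (le_abs_self _).trans (hlipF z (z - δ))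
    rw [sub_sub_cancel, abs_of_pos hδ0] at h1
    have h2 : δ ≤ 2 * ε := by
      have : ε ^ 3 ≤ ε := by simpa using pow_le_pow_of_le_one hε.le hε1 (show 1 ≤ 3 by norm_num)
      rw [hδ]; linarith
    calc I z / T - I (z - δ) / T = (I z - I (z - δ)) / T := by ring
      _ ≤ (2 * ε) / T := by gcongr; exact h1.trans h2
      _ = _ := by ring
  have hK : K₀ * (1 + M) / v₀ * ε ^ 4 = δ * (K₀ * (1 + M) / (2 * v₀) * ε) := by
    rw [hδ]; field_simp
  have s1 := (abs_le.1 (smooth z)).2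
  have s2 := (abs_le.1 (smooth (z - δ))).1
  rw [hK] at s1 s2
  have hTε : 0 ≤ 2 / T * ε := by positivity
  set P := ∑ ω, p ω * Set.indicator {ω | X ω ≤ z} 1 ω
  rw [abs_le]
  constructor
  · have : -(K₀ * (1 + M) / (2 * v₀) * ε) ≤ P - I (z - δ) / T := by
      refine le_of_mul_le_mul_left ?_ hδ0
      rw [mul_sub, mul_neg]
      linarith
    change _ ≤ P - I z / T
    linarith
  · have : P - I z / T ≤ K₀ * (1 + M) / (2 * v₀) * ε := by
      refine le_of_mul_le_mul_left ?_ hδ0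
      rw [mul_sub]
      linarith
    change P - I z / T ≤ _
    linarith

theorem sum_pow_four_le_of_shift {c C : ℝ} (hc : 0 < c) (hC : 0 ≤ C)
    {Ω : Type} [Fintype Ω] {p X u v : Ω → ℝ} {ε : ℝ} (hε : 0 < ε) (hε1 : ε ≤ 1)
    (hp : ∀ ω, 0 ≤ p ω) (hsum : ∑ ω, p ω = 1)
    (hshift : ∑ ω, p ω * (u ω * X ω) = ∑ ω, p ω * (v ω * (X ω - 2 * ε ^ 3)))
    (hdrift : ∀ ω, (u ω - v ω) * X ω ≤ -(c * ε ^ 3 * X ω ^ 4) + C * ε ^ 4 * |X ω|)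
    (hv : ∀ ω, v ω ≤ 1) :
    ∑ ω, p ω * X ω ^ 4 ≤ (C * (1 + 2 * C / c) + 2) / (c / 2) := by
  set A := 1 + 2 * C / c with hA
  have hA1 : 1 ≤ A := by
    have : 0 ≤ 2 * C / c := by positivity
    linarith
  have habs : ∀ x : ℝ, C * |x| ≤ c / 2 * x ^ 4 + C * A := by
    intro x
    have hx4 : 0 ≤ c / 2 * x ^ 4 := by positivity
    rcases le_total |x| A with hx | hx
    · nlinarith
    · have h1 : A ≤ |x| ^ 3 := hx.trans (by
        simpa using pow_le_pow_right₀ (hA1.trans hx) (show 1 ≤ 3 by norm_num))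
      have h2 : c / 2 * A = c / 2 + C := by rw [hA]; field_simp
      have h3 : C ≤ c / 2 * |x| ^ 3 := by nlinarith
      have h4 : x ^ 4 = |x| ^ 3 * |x| := by
        rw [← pow_succ, (by decide : Even 4).pow_abs]
      have h5 : C * |x| ≤ c / 2 * |x| ^ 3 * |x| := by gcongr
      have h6 : 0 ≤ C * A := by positivity
      rw [h4]; linarith
  have hpt : ∀ ω, p ω * (u ω * X ω) - p ω * (v ω * (X ω - 2 * ε ^ 3)) ≤
      ε ^ 3 * (-(c / 2) * (p ω * X ω ^ 4) + (C * A + 2) * p ω) := by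
    intro ω
    have h1 := hdrift ω
    have h2 := habs (X ω)
    have h3 := hv ω
    have hε3 : 0 < ε ^ 3 := by positivity
    have h4 : C * ε ^ 4 * |X ω| ≤ ε ^ 3 * (c / 2 * X ω ^ 4 + C * A) := by
      have : ε ^ 4 ≤ ε ^ 3 := pow_le_pow_of_le_one hε.le hε1 (by norm_num)
      calc C * ε ^ 4 * |X ω| ≤ C * ε ^ 3 * |X ω| := by gcongr
        _ = ε ^ 3 * (C * |X ω|) := by ring
        _ ≤ _ := by gcongr
    have h5 : v ω * (2 * ε ^ 3) ≤ 2 * ε ^ 3 := mul_le_of_le_one_left (by positivity) h3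
    calc _ = p ω * ((u ω - v ω) * X ω + v ω * (2 * ε ^ 3)) := by ring
      _ ≤ p ω * (ε ^ 3 * (-(c / 2) * X ω ^ 4 + (C * A + 2))) := by
          refine mul_le_mul_of_nonneg_left ?_ (hp ω)
          linarith
      _ = _ := by ring
  have htot := Finset.sum_le_sum fun ω (_ : ω ∈ Finset.univ) => hpt ω
  rw [Finset.sum_sub_distrib, hshift, sub_self, ← Finset.mul_sum, Finset.sum_add_distrib,
    ← Finset.mul_sum, ← Finset.mul_sum, hsum] at htot
  have := nonneg_of_mul_nonneg_right htot (show 0 < ε ^ 3 by positivity)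
  rw [le_div_iff₀ (by positivity)]
  linarith

/-- The monomer density takes values in `[0, 1]`. -/
theorem mDim_mem_Icc {N : ℕ} (hN : 1 ≤ N) (D : Dimer N) : mDim D ∈ Set.Icc (0 : ℝ) 1 := by
  have hN0 : (0 : ℝ) < N := by exact_mod_cast hN
  have hcard : ((monomers D).card : ℝ) ≤ N := by
    exact_mod_cast (Finset.card_le_univ _).trans (Fintype.card_fin N).le
  exact ⟨by unfold mDim; positivity, (div_le_one hN0).2 hcard⟩

/-- The total Gibbs weight is positive. -/
theorem sum_wDim_pos (N : ℕ) (J h : ℝ) : 0 < ∑ D : Dimer N, wDim N J h D :=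
  Finset.sum_pos (fun _ _ => Real.exp_pos _) ⟨⟨id, fun _ => rfl⟩, Finset.mem_univ _⟩

/-- The rate of the shift identity differs from the drift by `O(1/N)`. -/
theorem abs_rate_sub_drift_le {J : ℝ} (hJ : 0 < J) (h : ℝ) {m x : ℝ} (hm : m ∈ Set.Icc (0 : ℝ) 1)
    (hx : x ∈ Set.Icc (0 : ℝ) 1) :
    |(1 - m) * Real.exp (2 * tauFun J h m) * Real.exp (4 * J * x) - m * (m - x) - drift J h m| ≤
      (Real.exp (2 * (J + h)) * (4 * J * Real.exp (4 * J)) + 1) * x := by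
  obtain ⟨hm0, hm1⟩ := hm
  obtain ⟨hx0, hx1⟩ := hx
  have hτ : Real.exp (2 * tauFun J h m) ≤ Real.exp (2 * (J + h)) := by
    apply Real.exp_le_exp.2
    unfold tauFun
    nlinarith
  have hs0 : 0 ≤ 4 * J * x := by positivity
  have hlow : 0 ≤ Real.exp (4 * J * x) - 1 := by linarith [Real.one_le_exp hs0]
  have hupp : Real.exp (4 * J * x) - 1 ≤ 4 * J * Real.exp (4 * J) * x := by
    have h1 : Real.exp (4 * J * x) * Real.exp (-(4 * J * x)) = 1 := by
      rw [← Real.exp_add]; simp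
    have h2 := Real.add_one_le_exp (-(4 * J * x))
    have h3 : Real.exp (4 * J * x) ≤ Real.exp (4 * J) := Real.exp_le_exp.2 (by nlinarith)
    have h4 := mul_le_mul_of_nonneg_left h2 (Real.exp_pos (4 * J * x)).le
    have h5 := mul_le_mul_of_nonneg_left h3 hs0
    nlinarith
  have heq : (1 - m) * Real.exp (2 * tauFun J h m) * Real.exp (4 * J * x) - m * (m - x) -
      drift J h m = (1 - m) * (Real.exp (2 * tauFun J h m) * (Real.exp (4 * J * x) - 1)) + m * x := by
    unfold drift; ring
  have hprod : Real.exp (2 * tauFun J h m) * (Real.exp (4 * J * x) - 1) ≤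
      Real.exp (2 * (J + h)) * (4 * J * Real.exp (4 * J) * x) := by gcongr
  have hprod0 : 0 ≤ Real.exp (2 * tauFun J h m) * (Real.exp (4 * J * x) - 1) := by positivity
  have h1m : 0 ≤ 1 - m := by linarith
  rw [heq, abs_of_nonneg (by positivity)]
  nlinarith [mul_nonneg hm0 hprod0, mul_nonneg (sub_nonneg.2 hm1) hx0]

set_option maxHeartbeats 1000000 in
/-- At the critical point, the rescaled monomer count converges to the quartic exponential law at
speed `N ^ (-1/4)` in Kolmogorov distance. -/
theorem IsCritical.exists_kolmogorov_le {J h mc : ℝ} (hc : IsCritical J h mc) :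
    ∃ K : ℝ, ∀ N : ℕ, 1 ≤ N → ∀ z : ℝ,
      |probDim N J h
          (fun D => (((monomers D).card : ℝ) - N * mc) / (N:ℝ) ^ ((3:ℝ)/4) ≤ z)
        - (∫ t in Set.Iic z, Real.exp (-((24 + 17 * Real.sqrt 2) / 48) * t ^ 4)) /
            ∫ t : ℝ, Real.exp (-((24 + 17 * Real.sqrt 2) / 48) * t ^ 4)|
      ≤ K / (N:ℝ) ^ ((1:ℝ)/4) := by
  obtain ⟨hmc0, hmc1⟩ := hc.mc_mem
  have hJ := hc.J_pos
  obtain ⟨C₁, hC₁, hdrift⟩ := hc.abs_drift_add_le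
  obtain ⟨c, hc0, hmul⟩ := hc.exists_mul_drift_le
  set R := Real.exp (2 * (J + h)) * (4 * J * Real.exp (4 * J)) + 1 with hR
  have hR0 : 0 ≤ R := by positivity
  set b := (24 + 17 * Real.sqrt 2) / 48 with hb
  have hb0 : 0 < b := by positivity
  have hcoef : 8 * b * mc ^ 2 = (4 + 3 * Real.sqrt 2) / 3 := by
    have hs : Real.sqrt 2 ^ 2 = 2 := Real.sq_sqrt (by norm_num)
    have hs3 : Real.sqrt 2 ^ 3 = 2 * Real.sqrt 2 := by rw [pow_succ, hs]
    rw [hb, hc.mc_eq]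
    ring_nf
    rw [hs, hs3]
    ring
  obtain ⟨K, hK⟩ := kolmogorov_le_of_shift (b := b) (v₀ := mc ^ 2) (C := C₁ + R + 3)
    (M := (R * (1 + 2 * R / c) + 2) / (c / 2)) hb0 (by positivity) (by positivity)
  refine ⟨K, fun N hN z => ?_⟩
  have hN0 : (0 : ℝ) < N := by exact_mod_cast hN
  have hN1 : (1 : ℝ) ≤ N := by exact_mod_cast hN
  set s := (N : ℝ) ^ ((1 : ℝ) / 4) with hs
  have hs1 : 1 ≤ s := Real.one_le_rpow hN1 (by norm_num)
  have hs0 : 0 < s := by linarith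
  have hs4 : s ^ 4 = N := by
    rw [hs, ← Real.rpow_natCast, ← Real.rpow_mul hN0.le]; norm_num
  have hs3 : (N : ℝ) ^ ((3 : ℝ) / 4) = s ^ 3 := by
    rw [hs, ← Real.rpow_natCast, ← Real.rpow_mul hN0.le]; norm_num
  set ε := s⁻¹ with hε
  have hε0 : 0 < ε := inv_pos.2 hs0
  have hε1 : ε ≤ 1 := inv_le_one_of_one_le₀ hs1
  have hε4 : (1 : ℝ) / N = ε ^ 4 := by rw [hε, inv_pow, hs4, one_div]
  have hε41 : ε ^ 4 ∈ Set.Icc (0 : ℝ) 1 := ⟨by positivity, pow_le_one₀ hε0.le hε1⟩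
  set Z := ∑ D : Dimer N, wDim N J h D with hZ
  have hZ0 : 0 < Z := sum_wDim_pos N J h
  set p : Dimer N → ℝ := fun D => wDim N J h D / Z with hp
  set X : Dimer N → ℝ := fun D => (((monomers D).card : ℝ) - N * mc) / s ^ 3 with hX
  set u : Dimer N → ℝ := fun D =>
    (1 - mDim D) * Real.exp (2 * tauFun J h (mDim D)) * Real.exp (4 * J * ε ^ 4) with hu
  set v : Dimer N → ℝ := fun D => mDim D * (mDim D - ε ^ 4) with hv
  have hm := mDim_mem_Icc hN
  have hmX : ∀ D : Dimer N, mDim D = mc + ε * X D := by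
    intro D
    have : mDim D = (monomers D).card / s ^ 4 := by rw [hs4]; rfl
    rw [this, hX, hε, ← hs4]
    field_simp
    ring
  have hp0 : ∀ D, 0 ≤ p D := fun D => div_nonneg (Real.exp_pos _).le hZ0.le
  have hp1 : ∑ D, p D = 1 := by rw [hp, ← Finset.sum_div, div_self hZ0.ne']
  have hshift : ∀ G : ℝ → ℝ,
      ∑ D, p D * (u D * G (X D)) = ∑ D, p D * (v D * G (X D - 2 * ε ^ 3)) := by
    intro G
    have key := sum_wDim_shift hN J h fun k => G ((k - N * mc) / s ^ 3)
    have hexp : 4 * J / N = 4 * J * ε ^ 4 := by rw [← hε4]; ring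
    rw [hexp, hε4] at key
    have hleft : ∑ D, p D * (u D * G (X D)) =
        (∑ D, wDim N J h D * (u D * G (X D))) / Z := by
      rw [Finset.sum_div]
      exact Finset.sum_congr rfl fun D _ => by rw [hp]; ring
    have hright : ∑ D, p D * (v D * G (X D - 2 * ε ^ 3)) =
        (∑ D, wDim N J h D * (v D * G (((monomers D).card - 2 - N * mc) / s ^ 3))) / Z := by
      rw [Finset.sum_div]
      refine Finset.sum_congr rfl fun D _ => ?_
      have : X D - 2 * ε ^ 3 = ((monomers D).card - 2 - N * mc) / s ^ 3 := by
        rw [hX, hε]; field_simp; ring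
      rw [this, hp]
      ring
    rw [hleft, hright, key]
  have hrate : ∀ D, |u D - v D - drift J h (mDim D)| ≤ R * ε ^ 4 := fun D =>
    abs_rate_sub_drift_le hJ h (hm D) hε41
  have hv1 : ∀ D, v D ≤ 1 := by
    intro D
    obtain ⟨h0, h1⟩ := hm D
    have := mul_nonneg h0 hε41.1
    simp only [hv]
    nlinarith
  have hmoment := sum_pow_four_le_of_shift (X := X) hc0 hR0 hε0 hε1 hp0 hp1 (hshift id) (fun D => by
    have h1 := hmul _ (hm D)
    have h2 : mDim D - mc = ε * X D := by rw [hmX]; ring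
    rw [h2] at h1
    have h3 : X D * drift J h (mDim D) ≤ -(c * ε ^ 3 * X D ^ 4) := by
      refine le_of_mul_le_mul_left ?_ hε0
      linarith
    have h4 : (u D - v D - drift J h (mDim D)) * X D ≤ R * ε ^ 4 * |X D| := by
      refine (le_abs_self _).trans ?_
      rw [abs_mul]
      gcongr
      exact hrate D
    linarith) hv1
  have hbound := hK (Dimer N) p X u v ε hε0 hε1 hp0 hp1 hshift (fun D => by
    have h1 : |ε * X D| ≤ 1 := by
      have : ε * X D = mDim D - mc := by rw [hmX]; ring
      rw [this, abs_le]
      exact ⟨by linarith [(hm D).1], by linarith [(hm D).2]⟩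
    have h2 := hdrift _ h1
    rw [← hmX, ← hcoef] at h2
    have h3 : u D - v D + mc ^ 2 * (2 * ε ^ 3) * (4 * b * X D ^ 3) =
        (u D - v D - drift J h (mDim D)) +
          (drift J h (mDim D) + 8 * b * mc ^ 2 * (ε * X D) ^ 3) := by ring
    have h4 : 0 ≤ X D ^ 4 := by positivity
    rw [h3]
    calc _ ≤ R * ε ^ 4 + C₁ * (ε * X D) ^ 4 := (abs_add_le _ _).trans (add_le_add (hrate D) h2)
      _ = (R + C₁ * X D ^ 4) * ε ^ 4 := by ring
      _ ≤ ((C₁ + R + 3) * (1 + X D ^ 4)) * ε ^ 4 := by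
        gcongr
        nlinarith [mul_nonneg hR0 h4]
      _ = _ := by ring) (fun D => by
    obtain ⟨h0, h1⟩ := hm D
    have h2 : v D - mc ^ 2 = (mDim D + mc) * (ε * X D) - mDim D * ε ^ 4 := by
      have : ε * X D = mDim D - mc := by rw [hmX]; ring
      rw [this, hv]; ring
    have h3 : |X D| ≤ 1 + X D ^ 4 := by
      rw [abs_le]
      constructor <;> nlinarith [sq_nonneg (X D ^ 2 - 1), sq_nonneg (X D - 1), sq_nonneg (X D + 1)]
    have h4 : ε ^ 4 ≤ ε := by
      simpa using pow_le_pow_of_le_one hε0.le hε1 (show 1 ≤ 4 by norm_num)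
    have h5 : 0 ≤ X D ^ 4 := by positivity
    rw [h2]
    calc _ ≤ (mDim D + mc) * (ε * |X D|) + mDim D * ε ^ 4 := by
          refine (abs_sub _ _).trans (le_of_eq ?_)
          rw [abs_mul, abs_mul, abs_mul, abs_of_pos hε0, abs_of_nonneg (by linarith : 0 ≤ mDim D + mc),
            abs_of_nonneg h0, abs_of_nonneg hε41.1]
      _ ≤ 2 * (ε * (1 + X D ^ 4)) + 1 * ε := by
        gcongr
        linarith
      _ ≤ (C₁ + R + 3) * ε * (1 + X D ^ 4) := by
        have h6 := mul_nonneg hε0.le h5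
        have h7 := mul_nonneg (add_nonneg hC₁ hR0) (mul_nonneg hε0.le (by linarith : 0 ≤ 1 + X D ^ 4))
        nlinarith) hmoment z
  have hprob : probDim N J h (fun D => (((monomers D).card : ℝ) - N * mc) / (N:ℝ) ^ ((3:ℝ)/4) ≤ z) =
      ∑ D, p D * Set.indicator {D | X D ≤ z} 1 D := by
    rw [probDim, Finset.sum_div, hs3]
    refine Finset.sum_congr rfl fun D _ => ?_
    by_cases hD : X D ≤ z
    · rw [Set.indicator_of_mem (show D ∈ {D | X D ≤ z} from hD),
        Set.indicator_of_mem (show D ∈ {D | X D ≤ z} from hD)]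
      simp [hp, hZ]
    · rw [Set.indicator_of_notMem (show D ∉ {D | X D ≤ z} from hD),
        Set.indicator_of_notMem (show D ∉ {D | X D ≤ z} from hD)]
      simp
  rw [hprob, div_eq_mul_inv K]
  exact hbound

/-- At the critical point `(J_c, h_c)`, the unique maximizer of `𝑝̃`
is `m_c = 2 - √2`, `λ_c = -𝑝̃⁽⁴⁾(m_c) > 0`, and `(|𝓜(D)| - N m_c)/N^{3/4}` is within
Kolmogorov distance `K/N^{1/4}` of the law with density `c e^{-λ_c z⁴/24}`. -/
theorem stmt1 (J h mc : ℝ)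
    (hJ : J = 1 / (4 * (3 - 2 * Real.sqrt 2)))
    (hh : h = Real.log (2 * Real.sqrt 2 - 2) / 2 - 1/4)
    (hmc : mc = 2 - Real.sqrt 2) :
    mc ∈ Set.Icc (0:ℝ) 1 ∧
    (∀ m ∈ Set.Icc (0:ℝ) 1, ptilde J h m ≤ ptilde J h mc) ∧
    (∀ m ∈ Set.Icc (0:ℝ) 1, ptilde J h m = ptilde J h mc → m = mc) ∧
    0 < -iteratedDeriv 4 (ptilde J h) mc ∧
    ∃ K : ℝ, ∀ N : ℕ, 1 ≤ N → ∀ z : ℝ,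
      |probDim N J h
          (fun D => (((monomers D).card : ℝ) - N * mc) / (N:ℝ) ^ ((3:ℝ)/4) ≤ z)
        - (∫ t in Set.Iic z, Real.exp (iteratedDeriv 4 (ptilde J h) mc * t^4 / 24)) /
            ∫ t : ℝ, Real.exp (iteratedDeriv 4 (ptilde J h) mc * t^4 / 24)|
      ≤ K / (N:ℝ) ^ ((1:ℝ)/4) := by
  have hc := isCritical_of_eq hJ hh hmc
  refine ⟨Set.Ioo_subset_Icc_self hc.mc_mem, fun m hm => ?_, fun m hm heq => ?_, ?_, ?_⟩
  · rcases eq_or_ne m mc with rfl | hne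
    · exact le_rfl
    · exact (hc.ptilde_lt hm hne).le
  · by_contra hne
    exact (hc.ptilde_lt hm hne).ne heq
  · rw [hc.iteratedDeriv_four, neg_div, neg_neg]
    positivity
  · have hcoef : ∀ t : ℝ, -(24 + 17 * Real.sqrt 2) / 2 * t ^ 4 / 24 =
        -((24 + 17 * Real.sqrt 2) / 48) * t ^ 4 := fun t => by ring
    simp only [hc.iteratedDeriv_four, hcoef]
    exact hc.exists_kolmogorov_le
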